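/- (Theorem 1.) Let t ≥ 1 be an integer and let c > 0, ε > 0 be constants. Let x₁, …, x_m ∈ ℝ^{1×d} be row vectors with ‖x_j‖₂ = 1 for all j, let α ∈ ℝ^m be a probability vector (the attention scores at step t), and let the attention output a = (Σ_{j=1}^m α_j x_j) W_V W_O be nonzero. Let x' ∈ ℝ^{1×d} (the next token embedding) satisfy ‖x'‖₂ = 1 and a x'ᵀ ≥ (1 − δ)‖a‖₂ with 0 < δ ≤ (cε/(λ_Q λ_K λ_V λ_O))². Suppose that for every j ∈ {1, …, m}, x_j W x_jᵀ ≥ c and x_j W x_jᵀ ≥ ε^{-1} |x_i W x_jᵀ| for all i ≠ j. Define the next-step attention scores α' = softmax((1/(t+1))·x' W_Q W_Kᵀ Xᵀ) ∈ ℝ^m, where X ∈ ℝ^{m×d} has rows x₁, …, x_m, and set C_j = x_j W x_jᵀ / ((t+1)‖a‖₂) and η_j = (1+√2)·ε·x_j W x_jᵀ / ((t+1)‖a‖₂) for each j. Then for every ℓ ∈ {1, …, m}: α'_ℓ ≤ exp(C_ℓ α_ℓ + η_ℓ) / (exp(C_ℓ α_ℓ + η_ℓ) + Σ_{j ≠ ℓ}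 exp(C_j α_j − η_j)) and α'_ℓ ≥ exp(C_ℓ α_ℓ − η_ℓ) / (exp(C_ℓ α_ℓ − η_ℓ) + Σ_{j ≠ ℓ} exp(C_j α_j + η_j)). -/

import Mathlib

open Matrix BigOperators

/-- Euclidean norm of a row vector in ℝ^{1×d}. -/
noncomputable def rowNorm {d : ℕ} (x : Fin d → ℝ) : ℝ := Real.sqrt (∑ i, x i ^ 2)

/-- The ℓ²-operator norm (largest singular value) of a d×d real matrix. -/
noncomputable def opNorm2 {d : ℕ} (M : Matrix (Fin d) (Fin d) ℝ) : ℝ :=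
  ‖(Matrix.toEuclideanLin M).toContinuousLinearMap‖

/-- The softmax function on ℝ^m, defined coordinatewise by
softmax(γ)_j = exp(γ_j) / Σ_{k=1}^m exp(γ_k). -/
noncomputable def softmax {m : ℕ} (γ : Fin m → ℝ) : Fin m → ℝ :=
  fun j => Real.exp (γ j) / ∑ k, Real.exp (γ k)

/-!
Write `W = S ∘ T` with `T` the value-output map and `S` the query-key map, so that
`a = T (∑ αᵢ xᵢ)` and the next scores are proportional to `⟪S x', xⱼ⟫`. The alignment of `x'` with
`a` gives `‖‖a‖ x' - a‖ ≤ √(2δ) ‖a‖`, so replacing `‖a‖ x'` by `a` costs at most `√2 c ε`; near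
orthogonality of the keys under `W` then reduces `⟪S a, xⱼ⟫ = ∑ αᵢ ⟪W xᵢ, xⱼ⟫` to its diagonal term
`αⱼ ⟪W xⱼ, xⱼ⟫` up to `ε ⟪W xⱼ, xⱼ⟫`. Dividing by `(t + 1) ‖a‖` shows that the score of `xⱼ` is
`Cⱼ αⱼ` up to `ηⱼ`, and each softmax coordinate increases in its own score and decreases in the
others.
-/

open WithLp
open scoped RealInnerProductSpace Matrix.Norms.L2Operator

section WeightedSums

variable {ι : Type*} [Fintype ι]

lemma norm_sum_smul_le {E : Type*} [SeminormedAddCommGroup E] [NormedSpace ℝ E] {α : ι → ℝ}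
    {x : ι → E} {r : ℝ} (hα : ∀ j, 0 ≤ α j) (hx : ∀ j, ‖x j‖ ≤ r) :
    ‖∑ j, α j • x j‖ ≤ (∑ j, α j) * r := by
  rw [Finset.sum_mul]
  refine norm_sum_le_of_le _ fun j _ => ?_
  rw [norm_smul, Real.norm_of_nonneg (hα j)]
  exact mul_le_mul_of_nonneg_left (hx j) (hα j)

lemma abs_sum_mul_sub_le {α f : ι → ℝ} {j : ι} {r : ℝ} (hα : ∀ i, 0 ≤ α i) (hr : 0 ≤ r)
    (hf : ∀ i, i ≠ j → |f i| ≤ r) : |∑ i, α i * f i - α j * f j| ≤ (∑ i, α i) * r := by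
  classical
  rw [← Finset.add_sum_erase _ _ (Finset.mem_univ j), add_sub_cancel_left, Finset.sum_mul]
  calc |∑ i ∈ Finset.univ.erase j, α i * f i|
      ≤ ∑ i ∈ Finset.univ.erase j, |α i * f i| := Finset.abs_sum_le_sum_abs _ _
    _ ≤ ∑ i ∈ Finset.univ.erase j, α i * r := Finset.sum_le_sum fun i hi => by
        rw [abs_mul, abs_of_nonneg (hα i)]
        exact mul_le_mul_of_nonneg_left (hf i (Finset.ne_of_mem_erase hi)) (hα i)
    _ ≤ ∑ i, α i * r := Finset.sum_le_univ_sum_of_nonneg fun i => mul_nonneg (hα i) hr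

end WeightedSums

section AttentionScores

variable {ι E F : Type*} [NormedAddCommGroup E] [InnerProductSpace ℝ E]
  [NormedAddCommGroup F] [InnerProductSpace ℝ F]

lemma norm_norm_smul_sub_le {a y : F} {δ : ℝ} (hy : ‖y‖ ≤ 1) (h : (1 - δ) * ‖a‖ ≤ ⟪a, y⟫) :
    ‖‖a‖ • y - a‖ ≤ √(2 * δ) * ‖a‖ := by
  have hy_sq : ‖y‖ ^ 2 ≤ 1 := pow_le_one₀ (norm_nonneg y) hy
  have hsq : ‖‖a‖ • y - a‖ ^ 2 ≤ 2 * δ * ‖a‖ ^ 2 :=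
    calc ‖‖a‖ • y - a‖ ^ 2 = ‖a‖ ^ 2 * ‖y‖ ^ 2 - 2 * (‖a‖ * ⟪a, y⟫) + ‖a‖ ^ 2 := by
          rw [norm_sub_sq_real, norm_smul, norm_norm, mul_pow, real_inner_smul_left,
            real_inner_comm]
      _ ≤ ‖a‖ ^ 2 * 1 - 2 * (‖a‖ * ((1 - δ) * ‖a‖)) + ‖a‖ ^ 2 := by gcongr
      _ = 2 * δ * ‖a‖ ^ 2 := by ring
  calc ‖‖a‖ • y - a‖ ≤ √(2 * δ * ‖a‖ ^ 2) := Real.le_sqrt_of_sq_le hsq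
    _ = √(2 * δ) * ‖a‖ := by
        rw [Real.sqrt_mul' _ (sq_nonneg _), Real.sqrt_sq (norm_nonneg a)]

lemma abs_inner_map_norm_smul_sub_le {S : F →L[ℝ] E} {a y : F} {z : E} {δ K r : ℝ}
    (ha : ‖a‖ ≤ K) (hy : ‖y‖ ≤ 1) (hz : ‖z‖ ≤ 1) (hay : (1 - δ) * ‖a‖ ≤ ⟪a, y⟫)
    (hr : 0 ≤ r) (hδ : δ * (‖S‖ * K) ^ 2 ≤ r ^ 2) :
    |‖a‖ * ⟪S y, z⟫ - ⟪S a, z⟫| ≤ √2 * r := by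
  have hK : 0 ≤ ‖S‖ * K := mul_nonneg (norm_nonneg S) ((norm_nonneg a).trans ha)
  calc |‖a‖ * ⟪S y, z⟫ - ⟪S a, z⟫| = |⟪S (‖a‖ • y - a), z⟫| := by
        rw [map_sub, map_smul, inner_sub_left, real_inner_smul_left]
    _ ≤ ‖S (‖a‖ • y - a)‖ * ‖z‖ := abs_real_inner_le_norm _ _
    _ ≤ ‖S (‖a‖ • y - a)‖ := mul_le_of_le_one_right (norm_nonneg _) hz
    _ ≤ ‖S‖ * (√(2 * δ) * K) := S.le_opNorm_of_le <|
        (norm_norm_smul_sub_le hy hay).trans (by gcongr)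
    _ = √2 * √(δ * (‖S‖ * K) ^ 2) := by
        rw [Real.sqrt_mul' _ (sq_nonneg _), Real.sqrt_sq hK, Real.sqrt_mul zero_le_two]
        ring
    _ ≤ √2 * r := by
        gcongr
        exact Real.sqrt_le_iff.2 ⟨hr, hδ⟩

variable [Fintype ι]

lemma abs_inner_map_sum_smul_sub_le {W : E →L[ℝ] E} {x : ι → E} {α : ι → ℝ} {r : ℝ} {j : ι}
    (hα : ∀ i, 0 ≤ α i) (hα_sum : ∑ i, α i ≤ 1) (hr : 0 ≤ r)
    (hx : ∀ i, i ≠ j → |⟪W (x i), x j⟫| ≤ r) :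
    |⟪W (∑ i, α i • x i), x j⟫ - α j * ⟪W (x j), x j⟫| ≤ r := by
  simp only [map_sum, map_smul, sum_inner, real_inner_smul_left]
  exact (abs_sum_mul_sub_le hα hr hx).trans (mul_le_of_le_one_left hr hα_sum)

lemma abs_norm_mul_inner_sub_le {S : F →L[ℝ] E} {T : E →L[ℝ] F} {W : E →L[ℝ] E} {x : ι → E}
    {α : ι → ℝ} {a y : F} {c ε δ : ℝ} {j : ι} (hc : 0 ≤ c) (hε : 0 ≤ ε) (hW : W = S ∘L T)
    (hx : ∀ i, ‖x i‖ ≤ 1) (hα : ∀ i, 0 ≤ α i) (hα_sum : ∑ i, α i ≤ 1)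
    (ha : a = T (∑ i, α i • x i)) (hy : ‖y‖ ≤ 1) (hay : (1 - δ) * ‖a‖ ≤ ⟪a, y⟫)
    (hδ : δ * (‖S‖ * ‖T‖) ^ 2 ≤ (c * ε) ^ 2) (hdiag : c ≤ ⟪W (x j), x j⟫)
    (hdom : ∀ i, i ≠ j → |⟪W (x i), x j⟫| ≤ ε * ⟪W (x j), x j⟫) :
    |‖a‖ * ⟪S y, x j⟫ - α j * ⟪W (x j), x j⟫| ≤ (1 + √2) * ε * ⟪W (x j), x j⟫ := by
  have hSa : S a = W (∑ i, α i • x i) := by rw [ha, hW, ContinuousLinearMap.comp_apply]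
  have ha_norm : ‖a‖ ≤ ‖T‖ := by
    have hsum : ‖∑ i, α i • x i‖ ≤ 1 :=
      (norm_sum_smul_le hα hx).trans ((mul_one _).trans_le hα_sum)
    exact ha ▸ T.unit_le_opNorm _ hsum
  calc |‖a‖ * ⟪S y, x j⟫ - α j * ⟪W (x j), x j⟫|
      ≤ |‖a‖ * ⟪S y, x j⟫ - ⟪S a, x j⟫| + |⟪S a, x j⟫ - α j * ⟪W (x j), x j⟫| :=
        abs_sub_le _ _ _
    _ ≤ √2 * (c * ε) + ε * ⟪W (x j), x j⟫ := by
        refine add_le_add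
          (abs_inner_map_norm_smul_sub_le ha_norm hy (hx j) hay (mul_nonneg hc hε) hδ) ?_
        rw [hSa]
        exact abs_inner_map_sum_smul_sub_le hα hα_sum (mul_nonneg hε (hc.trans hdiag)) hdom
    _ ≤ √2 * (⟪W (x j), x j⟫ * ε) + ε * ⟪W (x j), x j⟫ := by gcongr
    _ = (1 + √2) * ε * ⟪W (x j), x j⟫ := by ring

end AttentionScores

section Softmax

lemma div_add_le_div_add {p q A B : ℝ} (hp : 0 < p) (hpq : p ≤ q) (hB : 0 ≤ B) (hBA : B ≤ A) :
    p / (p + A) ≤ q / (q + B) := by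
  rw [div_le_div_iff₀ (by linarith) (by linarith)]
  linarith [mul_le_mul hpq hBA hB (hp.le.trans hpq)]

variable {m : ℕ}

lemma softmax_eq_div_add_sum_erase (γ : Fin m → ℝ) (ℓ : Fin m) :
    softmax γ ℓ =
      Real.exp (γ ℓ) / (Real.exp (γ ℓ) + ∑ j ∈ Finset.univ.erase ℓ, Real.exp (γ j)) := by
  rw [Finset.add_sum_erase _ (fun j => Real.exp (γ j)) (Finset.mem_univ ℓ), softmax]

lemma softmax_le_div_add_sum_erase {γ γ' : Fin m → ℝ} {ℓ : Fin m} {u : ℝ}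
    (hu : γ ℓ ≤ u) (hγ' : ∀ j, γ' j ≤ γ j) :
    softmax γ ℓ ≤
      Real.exp u / (Real.exp u + ∑ j ∈ Finset.univ.erase ℓ, Real.exp (γ' j)) := by
  rw [softmax_eq_div_add_sum_erase]
  exact div_add_le_div_add (Real.exp_pos _) (Real.exp_le_exp.2 hu)
    (Finset.sum_nonneg fun _ _ => (Real.exp_pos _).le)
    (Finset.sum_le_sum fun j _ => Real.exp_le_exp.2 (hγ' j))

lemma div_add_sum_erase_le_softmax {γ γ' : Fin m → ℝ} {ℓ : Fin m} {u : ℝ}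
    (hu : u ≤ γ ℓ) (hγ' : ∀ j, γ j ≤ γ' j) :
    Real.exp u / (Real.exp u + ∑ j ∈ Finset.univ.erase ℓ, Real.exp (γ' j)) ≤
      softmax γ ℓ := by
  rw [softmax_eq_div_add_sum_erase]
  exact div_add_le_div_add (Real.exp_pos _) (Real.exp_le_exp.2 hu)
    (Finset.sum_nonneg fun _ _ => (Real.exp_pos _).le)
    (Finset.sum_le_sum fun j _ => Real.exp_le_exp.2 (hγ' j))

end Softmax

theorem stmt9_general {E F : Type*} [NormedAddCommGroup E] [InnerProductSpace ℝ E]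
    [NormedAddCommGroup F] [InnerProductSpace ℝ F] {m : ℕ} {τ c ε δ : ℝ}
    (hτ : 0 < τ) (hc : 0 ≤ c) (hε : 0 ≤ ε)
    {S : F →L[ℝ] E} {T : E →L[ℝ] F} {W : E →L[ℝ] E} (hW : W = S ∘L T)
    {x : Fin m → E} (hx : ∀ j, ‖x j‖ ≤ 1)
    {α : Fin m → ℝ} (hα : ∀ j, 0 ≤ α j) (hα_sum : ∑ j, α j ≤ 1)
    {a : F} (ha : a = T (∑ j, α j • x j)) (ha0 : a ≠ 0)
    {y : F} (hy : ‖y‖ ≤ 1) (hay : (1 - δ) * ‖a‖ ≤ ⟪a, y⟫)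
    (hδ : δ * (‖S‖ * ‖T‖) ^ 2 ≤ (c * ε) ^ 2)
    (hdiag : ∀ j, c ≤ ⟪W (x j), x j⟫)
    (hdom : ∀ j i, i ≠ j → |⟪W (x i), x j⟫| ≤ ε * ⟪W (x j), x j⟫)
    {α' : Fin m → ℝ} (hα' : α' = softmax fun j => 1 / τ * ⟪S y, x j⟫)
    {C η : Fin m → ℝ} (hC : ∀ j, C j = ⟪W (x j), x j⟫ / (τ * ‖a‖))
    (hη : ∀ j, η j = (1 + √2) * ε * ⟪W (x j), x j⟫ / (τ * ‖a‖)) (ℓ : Fin m) :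
    α' ℓ ≤ Real.exp (C ℓ * α ℓ + η ℓ) /
        (Real.exp (C ℓ * α ℓ + η ℓ) +
          ∑ j ∈ Finset.univ.erase ℓ, Real.exp (C j * α j - η j)) ∧
      α' ℓ ≥ Real.exp (C ℓ * α ℓ - η ℓ) /
        (Real.exp (C ℓ * α ℓ - η ℓ) +
          ∑ j ∈ Finset.univ.erase ℓ, Real.exp (C j * α j + η j)) := by
  have ha_pos : 0 < ‖a‖ := norm_pos_iff.2 ha0
  have hscore (j : Fin m) : |1 / τ * ⟪S y, x j⟫ - C j * α j| ≤ η j := by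
    have hrescale : 1 / τ * ⟪S y, x j⟫ - C j * α j =
        (‖a‖ * ⟪S y, x j⟫ - α j * ⟪W (x j), x j⟫) / (τ * ‖a‖) := by
      rw [hC]
      field_simp
    rw [hrescale, abs_div, abs_of_pos (mul_pos hτ ha_pos), hη]
    gcongr
    exact abs_norm_mul_inner_sub_le hc hε hW hx hα hα_sum ha hy hay hδ (hdiag j) (hdom j)
  have hlower (j : Fin m) : C j * α j - η j ≤ 1 / τ * ⟪S y, x j⟫ := by
    linarith [(abs_le.1 (hscore j)).1]
  have hupper (j : Fin m) : 1 / τ * ⟪S y, x j⟫ ≤ C j * α j + η j := by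
    linarith [(abs_le.1 (hscore j)).2]
  subst hα'
  exact ⟨softmax_le_div_add_sum_erase (hupper ℓ) hlower,
    div_add_sum_erase_le_softmax (hlower ℓ) hupper⟩

lemma mul_sq_le_sq_of_le_div_sq {δ r s k : ℝ} (hδ0 : 0 ≤ δ) (hs : 0 ≤ s) (hsk : s ≤ k)
    (hk : 0 < k) (hδ : δ ≤ (r / k) ^ 2) : δ * s ^ 2 ≤ r ^ 2 :=
  calc δ * s ^ 2 ≤ δ * k ^ 2 := by gcongr
    _ ≤ r ^ 2 := by rwa [div_pow, le_div_iff₀ (pow_pos hk 2)] at hδ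

section RowVectors

variable {d : ℕ}

/-- Right multiplication `v ↦ v M` of row vectors by a square matrix `M`, as a continuous linear
map of Euclidean space. It turns the row-vector convention of the theorem into operator form, and
it acts through `Mᵀ` because `Matrix.toEuclideanCLM` acts on columns. -/
noncomputable def vecMulCLM (M : Matrix (Fin d) (Fin d) ℝ) :
    EuclideanSpace ℝ (Fin d) →L[ℝ] EuclideanSpace ℝ (Fin d) :=
  Matrix.toEuclideanCLM (𝕜 := ℝ) Mᵀ

lemma toLp_vecMul (M : Matrix (Fin d) (Fin d) ℝ) (v : Fin d → ℝ) :
    toLp 2 (v ᵥ* M) = vecMulCLM M (toLp 2 v) := by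
  rw [vecMulCLM, Matrix.toEuclideanCLM_toLp, Matrix.mulVec_transpose]

lemma vecMulCLM_mul (A B : Matrix (Fin d) (Fin d) ℝ) :
    vecMulCLM (A * B) = vecMulCLM B ∘L vecMulCLM A := by
  rw [vecMulCLM, Matrix.transpose_mul, map_mul]
  rfl

lemma rowNorm_eq_norm_toLp (v : Fin d → ℝ) : rowNorm v = ‖toLp 2 v‖ := by
  simp only [rowNorm, EuclideanSpace.norm_eq, Real.norm_eq_abs, sq_abs]

lemma dotProduct_eq_inner_toLp (u v : Fin d → ℝ) : u ⬝ᵥ v = ⟪toLp 2 u, toLp 2 v⟫ := by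
  rw [EuclideanSpace.inner_toLp_toLp, star_trivial, dotProduct_comm]

lemma opNorm2_transpose (M : Matrix (Fin d) (Fin d) ℝ) : opNorm2 Mᵀ = opNorm2 M := by
  rw [← Matrix.conjTranspose_eq_transpose_of_trivial]
  exact Matrix.l2_opNorm_conjTranspose M

lemma norm_vecMulCLM (M : Matrix (Fin d) (Fin d) ℝ) : ‖vecMulCLM M‖ = opNorm2 M :=
  opNorm2_transpose M

lemma norm_vecMulCLM_mul_le (A B : Matrix (Fin d) (Fin d) ℝ) :
    ‖vecMulCLM (A * B)‖ ≤ opNorm2 A * opNorm2 B :=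
  (norm_vecMulCLM _).trans_le (Matrix.l2_opNorm_mul A B)

lemma norm_vecMulCLM_mul_norm_vecMulCLM_le (WQ WK WV WO : Matrix (Fin d) (Fin d) ℝ) :
    ‖vecMulCLM (WQ * WKᵀ)‖ * ‖vecMulCLM (WV * WO)‖ ≤
      opNorm2 WQ * opNorm2 WK * opNorm2 WV * opNorm2 WO := by
  rw [mul_assoc (opNorm2 WQ * opNorm2 WK), ← opNorm2_transpose WK]
  exact mul_le_mul (norm_vecMulCLM_mul_le WQ WKᵀ) (norm_vecMulCLM_mul_le WV WO)
    (norm_nonneg _) ((norm_nonneg _).trans (norm_vecMulCLM_mul_le WQ WKᵀ))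

end RowVectors

/-- (Theorem 1.) Let t ≥ 1, c > 0, ε > 0.  Let x₁, …, x_m be unit row vectors,
α a probability vector (attention scores at step t), and the attention output
a = (Σ_j α_j x_j) W_V W_O nonzero.  Let x' (the next token embedding) satisfy
‖x'‖₂ = 1 and a x'ᵀ ≥ (1 − δ)‖a‖₂ with 0 < δ ≤ (cε/(λ_Q λ_K λ_V λ_O))².
Suppose for every j, x_j W x_jᵀ ≥ c and x_j W x_jᵀ ≥ ε⁻¹ |x_i W x_jᵀ| for all
i ≠ j.  Let α' = softmax((1/(t+1))·x' W_Q W_Kᵀ Xᵀ), and set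
C_j = x_j W x_jᵀ / ((t+1)‖a‖₂), η_j = (1+√2)·ε·x_j W x_jᵀ / ((t+1)‖a‖₂).
Then for every ℓ:
α'_ℓ ≤ exp(C_ℓ α_ℓ + η_ℓ) / (exp(C_ℓ α_ℓ + η_ℓ) + Σ_{j ≠ ℓ} exp(C_j α_j − η_j)) and
α'_ℓ ≥ exp(C_ℓ α_ℓ − η_ℓ) / (exp(C_ℓ α_ℓ − η_ℓ) + Σ_{j ≠ ℓ} exp(C_j α_j + η_j)). -/
theorem stmt9 {d m : ℕ} (t : ℕ) (ht : 1 ≤ t)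
    (c ε δ : ℝ) (hc : 0 < c) (hε : 0 < ε)
    (WQ WK WV WO : Matrix (Fin d) (Fin d) ℝ)
    (hsvQ : 0 < opNorm2 WQ) (hsvK : 0 < opNorm2 WK)
    (hsvV : 0 < opNorm2 WV) (hsvO : 0 < opNorm2 WO)
    (W : Matrix (Fin d) (Fin d) ℝ) (hW : W = WV * WO * WQ * WKᵀ)
    (x : Fin m → (Fin d → ℝ)) (hx : ∀ j, rowNorm (x j) = 1)
    (α : Fin m → ℝ) (hα0 : ∀ j, 0 ≤ α j) (hα1 : ∑ j, α j = 1)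
    (a : Fin d → ℝ) (ha : a = (∑ j, α j • x j) ᵥ* (WV * WO)) (ha0 : a ≠ 0)
    (x' : Fin d → ℝ) (hx' : rowNorm x' = 1)
    (hax' : a ⬝ᵥ x' ≥ (1 - δ) * rowNorm a)
    (hδ0 : 0 < δ)
    (hδ : δ ≤ (c * ε / (opNorm2 WQ * opNorm2 WK * opNorm2 WV * opNorm2 WO)) ^ 2)
    (hdiag : ∀ j, (x j ᵥ* W) ⬝ᵥ x j ≥ c)
    (hdom : ∀ j, ∀ i, i ≠ j → (x j ᵥ* W) ⬝ᵥ x j ≥ ε⁻¹ * |(x i ᵥ* W) ⬝ᵥ x j|)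
    (α' : Fin m → ℝ)
    (hα' : α' = softmax (fun j => (1 / ((t : ℝ) + 1)) * ((x' ᵥ* (WQ * WKᵀ)) ⬝ᵥ x j)))
    (C η : Fin m → ℝ)
    (hC : ∀ j, C j = (x j ᵥ* W) ⬝ᵥ x j / (((t : ℝ) + 1) * rowNorm a))
    (hη : ∀ j, η j = (1 + Real.sqrt 2) * ε * ((x j ᵥ* W) ⬝ᵥ x j) /
      (((t : ℝ) + 1) * rowNorm a)) :
    ∀ ℓ : Fin m,
      α' ℓ ≤ Real.exp (C ℓ * α ℓ + η ℓ) /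
          (Real.exp (C ℓ * α ℓ + η ℓ) +
            ∑ j ∈ Finset.univ.erase ℓ, Real.exp (C j * α j - η j)) ∧
        α' ℓ ≥ Real.exp (C ℓ * α ℓ - η ℓ) /
          (Real.exp (C ℓ * α ℓ - η ℓ) +
            ∑ j ∈ Finset.univ.erase ℓ, Real.exp (C j * α j + η j)) := by
  have hδ' := mul_sq_le_sq_of_le_div_sq hδ0.le (by positivity)
    (norm_vecMulCLM_mul_norm_vecMulCLM_le WQ WK WV WO) (by positivity) hδ
  simp only [rowNorm_eq_norm_toLp, dotProduct_eq_inner_toLp, toLp_vecMul] at *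
  exact stmt9_general (by positivity) hc.le hε.le
    (by rw [hW, Matrix.mul_assoc, vecMulCLM_mul]) (fun j => (hx j).le) hα0 hα1.le
    (by rw [ha, toLp_vecMul, toLp_sum]; rfl) (mt (toLp_eq_zero 2).1 ha0) hx'.le hax' hδ' hdiag
    (fun j i hij => (inv_mul_le_iff₀ hε).1 (hdom j i hij)) hα' hC hη
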